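/- arXiv:2302.04626 — 2 statements merged into one kernel-verified Lean document; each statement's English description precedes it below -/
import Mathlib

section
/- Let x : ℕ → ℝ satisfy 0 < x_0 ≤ 1 and x_{p+1} = ((3 − x_p)/2)² · x_p for all p. Then the sequence (x_p) is monotone nondecreasing, satisfies 0 < x_p ≤ 1 for all p, and converges to 1 as p → ∞. -/
/-!
The error `e = 1 - x` obeys `1 - ((3 - x) / 2)² x = e² (1 - x / 4)`, so on `(0, 1]` one step at
least squares it: `1 - x_p ≤ (1 - x₀) ^ 2 ^ p`, and the right-hand side tends to `0`.
-/

open Filter Set Topology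

section Step

variable {K : Type*} [Field K]

/-- One step of the Schur–Newton iteration `N ↦ ((3I - N) / 2)² N`, acting on a single
eigenvalue. -/
def schurNewtonStep (x : K) : K :=
  ((3 - x) / 2) ^ 2 * x

/-- The sequence `x` is an orbit of `schurNewtonStep`: it follows one eigenvalue through the
Schur–Newton iteration. The starting value `x 0` is left free. -/
def IsSchurNewtonSeq (x : ℕ → K) : Prop :=
  ∀ p, x (p + 1) = schurNewtonStep (x p)

theorem one_sub_schurNewtonStep [CharZero K] (x : K) :
    1 - schurNewtonStep x = (1 - x) ^ 2 * (1 - x / 4) := by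
  unfold schurNewtonStep
  ring

theorem schurNewtonStep_sub_self [CharZero K] (x : K) :
    schurNewtonStep x - x = x * (1 - x) * (5 - x) / 4 := by
  unfold schurNewtonStep
  ring

variable [LinearOrder K] [IsStrictOrderedRing K] {x : K}

theorem schurNewtonStep_pos (hx : 0 < x) (hx3 : x ≠ 3) : 0 < schurNewtonStep x := by
  have h : (3 - x) / 2 ≠ 0 := div_ne_zero (sub_ne_zero.2 hx3.symm) two_ne_zero
  exact mul_pos (sq_pos_of_ne_zero h) hx

theorem schurNewtonStep_le_one (hx : x ≤ 4) : schurNewtonStep x ≤ 1 := by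
  rw [← sub_nonneg, one_sub_schurNewtonStep]
  exact mul_nonneg (sq_nonneg _) (by linarith)

theorem le_schurNewtonStep (hx0 : 0 ≤ x) (hx1 : x ≤ 1) : x ≤ schurNewtonStep x := by
  rw [← sub_nonneg, schurNewtonStep_sub_self]
  have h : 0 ≤ x * (1 - x) := mul_nonneg hx0 (sub_nonneg.2 hx1)
  exact div_nonneg (mul_nonneg h (by linarith)) zero_le_four

theorem one_sub_schurNewtonStep_le_sq (hx : 0 ≤ x) : 1 - schurNewtonStep x ≤ (1 - x) ^ 2 := by
  rw [one_sub_schurNewtonStep]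
  exact mul_le_of_le_one_right (sq_nonneg _) (by linarith)

end Step

namespace IsSchurNewtonSeq

variable {K : Type*} [Field K] [LinearOrder K] [IsStrictOrderedRing K] {x : ℕ → K}

theorem mem_Ioc (hx : IsSchurNewtonSeq x) (h0 : x 0 ∈ Ioc 0 1) (p : ℕ) : x p ∈ Ioc 0 1 := by
  induction p with
  | zero => exact h0
  | succ p ih =>
    obtain ⟨hpos, hle⟩ := ih
    rw [hx p]
    exact ⟨schurNewtonStep_pos hpos (by linarith : x p < 3).ne,
      schurNewtonStep_le_one (by linarith)⟩

theorem monotone (hx : IsSchurNewtonSeq x) (h0 : x 0 ∈ Ioc 0 1) : Monotone x :=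
  monotone_nat_of_le_succ fun p ↦ by
    obtain ⟨hpos, hle⟩ := hx.mem_Ioc h0 p
    exact (le_schurNewtonStep hpos.le hle).trans_eq (hx p).symm

theorem one_sub_le_pow (hx : IsSchurNewtonSeq x) (h0 : x 0 ∈ Ioc 0 1) (p : ℕ) :
    1 - x p ≤ (1 - x 0) ^ 2 ^ p := by
  induction p with
  | zero => simp
  | succ p ih =>
    obtain ⟨hpos, hle⟩ := hx.mem_Ioc h0 p
    calc
      1 - x (p + 1) = 1 - schurNewtonStep (x p) := by rw [hx p]
      _ ≤ (1 - x p) ^ 2 := one_sub_schurNewtonStep_le_sq hpos.le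
      _ ≤ ((1 - x 0) ^ 2 ^ p) ^ 2 := pow_le_pow_left₀ (sub_nonneg.2 hle) ih 2
      _ = (1 - x 0) ^ 2 ^ (p + 1) := by rw [← pow_mul, ← pow_succ]

theorem tendsto_one [Archimedean K] [TopologicalSpace K] [OrderTopology K]
    (hx : IsSchurNewtonSeq x) (h0 : x 0 ∈ Ioc 0 1) : Tendsto x atTop (𝓝 1) := by
  have hpow : Tendsto (fun p : ℕ ↦ (1 - x 0) ^ 2 ^ p) atTop (𝓝 0) :=
    (tendsto_pow_atTop_nhds_zero_of_lt_one (sub_nonneg.2 h0.2) (sub_lt_self 1 h0.1)).comp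
      (tendsto_pow_atTop_atTop_of_one_lt one_lt_two)
  have hlower : Tendsto (fun p : ℕ ↦ 1 - (1 - x 0) ^ 2 ^ p) atTop (𝓝 1) := by
    simpa only [sub_zero] using hpow.const_sub 1
  exact tendsto_of_tendsto_of_tendsto_of_le_of_le hlower tendsto_const_nhds
    (fun p ↦ sub_le_comm.1 (hx.one_sub_le_pow h0 p)) fun p ↦ (hx.mem_Ioc h0 p).2

end IsSchurNewtonSeq

theorem scalar_schur_newton_tendsto_one_general {K : Type*} [Field K] [LinearOrder K]
    [IsStrictOrderedRing K] [Archimedean K] [TopologicalSpace K] [OrderTopology K]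
    (x : ℕ → K) (h0 : 0 < x 0) (h1 : x 0 ≤ 1)
    (hrec : ∀ p, x (p + 1) = ((3 - x p) / 2) ^ 2 * x p) :
    Monotone x ∧ (∀ p, 0 < x p ∧ x p ≤ 1) ∧ Tendsto x atTop (𝓝 1) := by
  have hx : IsSchurNewtonSeq x := hrec
  have hmem : x 0 ∈ Ioc 0 1 := ⟨h0, h1⟩
  exact ⟨hx.monotone hmem, hx.mem_Ioc hmem, hx.tendsto_one hmem⟩

/-- The scalar Schur–Newton iteration
`x_{p+1} = ((3 − x_p)/2)² · x_p` starting from `x₀ ∈ (0, 1]` is monotone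
nondecreasing, stays in `(0, 1]`, and converges to `1`. -/
theorem scalar_schur_newton_tendsto_one
    (x : ℕ → ℝ) (h0 : 0 < x 0) (h1 : x 0 ≤ 1)
    (hrec : ∀ p, x (p + 1) = ((3 - x p) / 2) ^ 2 * x p) :
    Monotone x ∧ (∀ p, 0 < x p ∧ x p ≤ 1) ∧
      Filter.Tendsto x Filter.atTop (nhds 1) :=
  scalar_schur_newton_tendsto_one_general x h0 h1 hrec
end

section
/- Let x : ℕ → ℝ satisfy 0 < x_0 ≤ 1 and x_{p+1} = ((3 − x_p)/2)² · x_p for all p, and define q : ℕ → ℝ by q_0 = 1 and q_{p+1} = q_p · (3 − x_p)/2. Then q_p > 0 for all p, x_p = q_p² · x_0 for all p, and q_p converges to x_0^{−1/2} as p → ∞. -/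
/-!
The residual `1 - t` of the map `t ↦ ((3 - t) / 2)² t` is transformed into
`(1 - t)² (1 - t / 4)`. Hence one step sends `(0, 3)` into `(0, 1]`, and from there the residual is
at least squared at every step, so that `x_p → 1` quadratically. Both sequences are driven by the
same factors `(3 - x_p) / 2`, once squared and once not, whence `x_p = q_p² x₀`; as `q_p > 0`, its
limit is the positive square root of `1 / x₀`.
-/

section Map

open Filter Function Set Topology

variable {K : Type*} [Field K]

/-- One step of the scalar Schur–Newton iteration: the action of `N ↦ ((3I - N) / 2)² N` on an
eigenvalue `t` of `N`. -/
def schurNewtonMap (t : K) : K := ((3 - t) / 2) ^ 2 * t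

lemma one_sub_schurNewtonMap [CharZero K] (t : K) :
    1 - schurNewtonMap t = (1 - t) ^ 2 * (1 - t / 4) := by
  unfold schurNewtonMap
  ring

variable [LinearOrder K] [IsStrictOrderedRing K] {t : K}

lemma one_sub_schurNewtonMap_le_sq (ht : 0 ≤ t) : 1 - schurNewtonMap t ≤ (1 - t) ^ 2 := by
  rw [one_sub_schurNewtonMap]
  exact mul_le_of_le_one_right (sq_nonneg _) (by linarith)

lemma schurNewtonMap_le_one (ht : t ≤ 4) : schurNewtonMap t ≤ 1 := by
  rw [← sub_nonneg, one_sub_schurNewtonMap]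
  exact mul_nonneg (sq_nonneg _) (by linarith)

lemma schurNewtonMap_pos (h0 : 0 < t) (h3 : t ≠ 3) : 0 < schurNewtonMap t :=
  mul_pos (sq_pos_of_ne_zero (div_ne_zero (sub_ne_zero.2 h3.symm) two_ne_zero)) h0

lemma mapsTo_schurNewtonMap : MapsTo (schurNewtonMap : K → K) (Ioo 0 3) (Ioc 0 1) :=
  fun _ ht => ⟨schurNewtonMap_pos ht.1 ht.2.ne, schurNewtonMap_le_one (by linarith [ht.2])⟩

lemma Ioc_zero_one_subset_Ioo_zero_three : Ioc (0 : K) 1 ⊆ Ioo 0 3 :=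
  Ioc_subset_Ioo_right (by norm_num)

lemma iterate_schurNewtonMap_mem_Ioo (ht : t ∈ Ioo 0 3) (n : ℕ) :
    schurNewtonMap^[n] t ∈ Ioo 0 3 :=
  (mapsTo_schurNewtonMap.mono_right Ioc_zero_one_subset_Ioo_zero_three).iterate n ht

lemma iterate_schurNewtonMap_mem_Ioc (ht : t ∈ Ioc 0 1) (n : ℕ) :
    schurNewtonMap^[n] t ∈ Ioc 0 1 :=
  (mapsTo_schurNewtonMap.mono_left Ioc_zero_one_subset_Ioo_zero_three).iterate n ht

lemma one_sub_iterate_schurNewtonMap_le (ht : t ∈ Ioc 0 1) (n : ℕ) :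
    1 - schurNewtonMap^[n] t ≤ (1 - t) ^ 2 ^ n := by
  induction n with
  | zero => simp
  | succ n ih =>
    obtain ⟨hpos, hle⟩ := iterate_schurNewtonMap_mem_Ioc ht n
    calc 1 - schurNewtonMap^[n + 1] t
        = 1 - schurNewtonMap (schurNewtonMap^[n] t) := by rw [iterate_succ_apply']
      _ ≤ (1 - schurNewtonMap^[n] t) ^ 2 := one_sub_schurNewtonMap_le_sq hpos.le
      _ ≤ ((1 - t) ^ 2 ^ n) ^ 2 := pow_le_pow_left₀ (sub_nonneg.2 hle) ih 2
      _ = (1 - t) ^ 2 ^ (n + 1) := by rw [← pow_mul, ← pow_succ]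

variable [Archimedean K] [TopologicalSpace K] [OrderTopology K]

lemma tendsto_iterate_schurNewtonMap_of_mem_Ioc (ht : t ∈ Ioc 0 1) :
    Tendsto (fun n => schurNewtonMap^[n] t) atTop (𝓝 1) := by
  have hresidual : Tendsto (fun n : ℕ => (1 - t) ^ 2 ^ n) atTop (𝓝 0) :=
    (tendsto_pow_atTop_nhds_zero_of_lt_one (sub_nonneg.2 ht.2) (sub_lt_self 1 ht.1)).comp
      (tendsto_pow_atTop_atTop_of_one_lt one_lt_two)
  have hlower : Tendsto (fun n : ℕ => 1 - (1 - t) ^ 2 ^ n) atTop (𝓝 1) := by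
    simpa only [sub_zero] using hresidual.const_sub 1
  exact tendsto_of_tendsto_of_tendsto_of_le_of_le hlower tendsto_const_nhds
    (fun n => sub_le_comm.1 (one_sub_iterate_schurNewtonMap_le ht n))
    (fun n => (iterate_schurNewtonMap_mem_Ioc ht n).2)

lemma tendsto_iterate_schurNewtonMap (ht : t ∈ Ioo 0 3) :
    Tendsto (fun n => schurNewtonMap^[n] t) atTop (𝓝 1) :=
  (tendsto_add_atTop_iff_nat 1).1
    (tendsto_iterate_schurNewtonMap_of_mem_Ioc (mapsTo_schurNewtonMap ht))

end Map

section Coupling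

open Filter Topology

lemma eq_iterate_of_succ_eq {α : Type*} {f : α → α} {x : ℕ → α}
    (hx : ∀ n, x (n + 1) = f (x n)) (n : ℕ) : x n = f^[n] (x 0) := by
  induction n with
  | zero => rfl
  | succ n ih => rw [hx, ih, Function.iterate_succ_apply']

lemma eq_sq_mul_of_succ_eq {M : Type*} [CommMonoid M] {x q c : ℕ → M}
    (hx : ∀ n, x (n + 1) = c n ^ 2 * x n) (hq0 : q 0 = 1) (hq : ∀ n, q (n + 1) = q n * c n)
    (n : ℕ) : x n = q n ^ 2 * x 0 := by
  induction n with
  | zero => rw [hq0, one_pow, one_mul]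
  | succ n ih => rw [hx, ih, hq, mul_pow, ← mul_assoc, mul_comm (c n ^ 2)]

lemma pos_of_succ_eq_mul {R : Type*} [Semiring R] [PartialOrder R] [IsStrictOrderedRing R]
    {q c : ℕ → R} (hq0 : 0 < q 0) (hq : ∀ n, q (n + 1) = q n * c n) (hc : ∀ n, 0 < c n)
    (n : ℕ) : 0 < q n := by
  induction n with
  | zero => exact hq0
  | succ n ih => exact hq n ▸ mul_pos ih (hc n)

lemma tendsto_inv_sqrt_of_tendsto_sq_mul {ι : Type*} {l : Filter ι} {q : ι → ℝ} {a : ℝ}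
    (ha : a ≠ 0) (hq : ∀ i, 0 ≤ q i) (hlim : Tendsto (fun i => q i ^ 2 * a) l (𝓝 1)) :
    Tendsto q l (𝓝 (√a)⁻¹) := by
  have hsq : Tendsto (fun i => q i ^ 2) l (𝓝 a⁻¹) := by
    simpa only [mul_div_cancel_right₀ _ ha, one_div] using hlim.div_const a
  simpa only [Real.sqrt_sq (hq _), Real.sqrt_inv] using hsq.sqrt

end Coupling

theorem scalar_schur_newton_inverse_sqrt_general
    (x q : ℕ → ℝ) (h0 : 0 < x 0) (h3 : x 0 < 3)
    (hrec : ∀ p, x (p + 1) = ((3 - x p) / 2) ^ 2 * x p)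
    (hq0 : q 0 = 1) (hqrec : ∀ p, q (p + 1) = q p * (3 - x p) / 2) :
    (∀ p, 0 < q p) ∧ (∀ p, x p = q p ^ 2 * x 0) ∧
      Filter.Tendsto q Filter.atTop (nhds (Real.sqrt (x 0))⁻¹) := by
  have hiter : ∀ p, x p = schurNewtonMap^[p] (x 0) := eq_iterate_of_succ_eq hrec
  have hfactor : ∀ p, 0 < (3 - x p) / 2 := fun p =>
    half_pos (sub_pos.2 (hiter p ▸ (iterate_schurNewtonMap_mem_Ioo ⟨h0, h3⟩ p).2))
  have hqstep : ∀ p, q (p + 1) = q p * ((3 - x p) / 2) := fun p =>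
    (hqrec p).trans (mul_div_assoc _ _ _)
  have hqpos : ∀ p, 0 < q p := pos_of_succ_eq_mul (hq0 ▸ one_pos) hqstep hfactor
  have hxq : ∀ p, x p = q p ^ 2 * x 0 := eq_sq_mul_of_succ_eq hrec hq0 hqstep
  refine ⟨hqpos, hxq, tendsto_inv_sqrt_of_tendsto_sq_mul h0.ne' (fun p => (hqpos p).le) ?_⟩
  exact (tendsto_iterate_schurNewtonMap ⟨h0, h3⟩).congr fun p => (hiter p).symm.trans (hxq p)

/-- For the coupled scalar Schur–Newton iteration
`x_{p+1} = ((3 − x_p)/2)² · x_p` with `x₀ ∈ (0, 1]` and `q₀ = 1`,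
`q_{p+1} = q_p · (3 − x_p)/2`, one has `q_p > 0`, `x_p = q_p² · x₀` for all `p`,
and `q_p → x₀^{-1/2}`. -/
theorem scalar_schur_newton_inverse_sqrt
    (x q : ℕ → ℝ) (h0 : 0 < x 0) (h1 : x 0 ≤ 1)
    (hrec : ∀ p, x (p + 1) = ((3 - x p) / 2) ^ 2 * x p)
    (hq0 : q 0 = 1) (hqrec : ∀ p, q (p + 1) = q p * (3 - x p) / 2) :
    (∀ p, 0 < q p) ∧ (∀ p, x p = q p ^ 2 * x 0) ∧
      Filter.Tendsto q Filter.atTop (nhds (Real.sqrt (x 0))⁻¹) := by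
  exact scalar_schur_newton_inverse_sqrt_general x q h0 (by linarith) hrec hq0 hqrec
end
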